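/- arXiv:2102.09522 — 2 statements merged into one kernel-verified Lean document; each statement's English description precedes it below -/
import Mathlib

section
/- Let j ≥ 2. In W = Λ^{2j} ℚ^{4j−1} with the permutation action of S_{4j−1} and the submodule K generated by ρ, the following three vectors all lie in K: (i) e_1 ∧ e_2 ∧ S + e_1 ∧ e_2 ∧ e_3 ∧ S_1, (ii) e_1 ∧ e_3 ∧ S − e_1 ∧ e_2 ∧ e_3 ∧ S_1, and (iii) e_2 ∧ e_3 ∧ S + e_1 ∧ e_2 ∧ e_3 ∧ S_1. -/
set_option synthInstance.maxHeartbeats 1000000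
set_option maxHeartbeats 1000000

noncomputable section

open ExteriorAlgebra

/-- The standard basis vector `e_{m+1}` of `ℚ^{4j−1}` (with `0`-based index `m`). -/
def ε (j : ℕ) (m : Fin (4*j-1)) : Fin (4*j-1) → ℚ := Pi.single m 1

/-- The action of `S_N` on the exterior algebra of `ℚ^N` induced by permuting the standard
basis vectors (`g` sends `e_m` to `e_{g m}`). -/
def pact (N : ℕ) (g : Equiv.Perm (Fin N)) :
    ExteriorAlgebra ℚ (Fin N → ℚ) →ₗ[ℚ] ExteriorAlgebra ℚ (Fin N → ℚ) :=
  (ExteriorAlgebra.map (LinearMap.funLeft ℚ ℚ ⇑g⁻¹)).toLinearMap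

/-- The element of the `i`-th loop `B_i = {2i+2, 2i+3}` (1-indexed; here `i` is `0`-based)
selected by the Boolean `b`. -/
def idx (j : ℕ) (k : Fin (2*j-2)) (b : Bool) : Fin (4*j-1) :=
  ⟨2*(k : ℕ) + 3 + b.toNat, by have := Bool.toNat_lt b; omega⟩

/-- `S_I`: the sum, over all choices of one element `s_i ∈ B_i` for each loop `i ∉ I`, of the
wedge products `e_{s_{i_1}} ∧ ⋯ ∧ e_{s_{i_m}}` taken in increasing order of the loop indices
`i ∉ I`. -/
def SI (j : ℕ) (I : Finset (Fin (2*j-2))) : ExteriorAlgebra ℚ (Fin (4*j-1) → ℚ) :=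
  ∑ c ∈ Finset.univ.filter (fun c : Fin (2*j-2) → Bool => ∀ i ∈ I, c i = false),
    (List.ofFn fun k : Fin (2*j-2) =>
      if k ∈ I then 1 else ExteriorAlgebra.ι ℚ (ε j (idx j k (c k)))).prod

/-- The wedge `e_{2j} ∧ e_{2j+1} ∧ ⋯ ∧ e_{4j−1}`. -/
def ρbase (j : ℕ) : ExteriorAlgebra ℚ (Fin (4*j-1) → ℚ) :=
  (List.ofFn fun k : Fin (2*j) =>
    ExteriorAlgebra.ι ℚ (ε j ⟨2*j - 1 + (k : ℕ), by omega⟩)).prod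

/-- `ρ = (1 + ∑_{i=1}^{2j−1} (i 2j)) · (e_{2j} ∧ e_{2j+1} ∧ ⋯ ∧ e_{4j−1})`. -/
def ρElt (j : ℕ) : ExteriorAlgebra ℚ (Fin (4*j-1) → ℚ) :=
  ρbase j + ∑ m : Fin (2*j-1),
    pact (4*j-1) (Equiv.swap (⟨(m : ℕ), by omega⟩ : Fin (4*j-1)) ⟨2*j - 1, by have := m.isLt; omega⟩) (ρbase j)

/-- `K`: the `ℚ[S_{4j−1}]`-submodule of `W = Λ^{2j} ℚ^{4j−1}` generated by `ρ`, i.e. the span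
of the `S_{4j−1}`-orbit of `ρ`. -/
def Ksub (j : ℕ) : Submodule ℚ (ExteriorAlgebra ℚ (Fin (4*j-1) → ℚ)) :=
  Submodule.span ℚ (Set.range fun g : Equiv.Perm (Fin (4*j-1)) => pact (4*j-1) g (ρElt j))

end

noncomputable section

/-- `e_{m+1}` as an element of the exterior algebra. -/
def E (j : ℕ) (m : Fin (4*j-1)) : ExteriorAlgebra ℚ (Fin (4*j-1) → ℚ) :=
  ExteriorAlgebra.ι ℚ (ε j m)

end

/-!
The sum `u = e_1 + ⋯ + e_{4j-1}` is fixed by `S_{4j-1}`, and `ρ = u ∧ e_{2j+1} ∧ ⋯ ∧ e_{4j-1}`: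
the `2j` terms of `ρ` come from the summands `e_1, …, e_{2j}` of `u`, and the remaining summands
are annihilated by the wedge. Since `S_{4j-1}` carries `e_{2j+1} ∧ ⋯ ∧ e_{4j-1}` to every basis
element of `Λ^{2j-1}`, it follows that `u ∧ Λ^{2j-1} ⊆ K`.

On the other hand `S_I` is a wedge product of loop sums `e_{2i+2} + e_{2i+3}`, and `u` is
`e_1 + e_2 + e_3` plus all loop sums. Every loop sum other than the first annihilates `S_1`, so
`u ∧ S_1 = (e_1 + e_2 + e_3) ∧ S_1 + S`. Multiplying by `e_a ∧ e_b` with `a < b ≤ 3` gives the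
three vectors.
-/

noncomputable section

open ExteriorAlgebra Equiv

section ListProd

theorem prod_map_ite_one_eq_prod_map_filter {α A : Type*} [Monoid A] (p : α → Prop)
    [DecidablePred p] (f : α → A) (l : List α) :
    (l.map fun a => if p a then 1 else f a).prod = ((l.filter (¬ p ·)).map f).prod := by
  induction l with
  | nil => rfl
  | cons a l ih => by_cases ha : p a <;> simp [ha, ih]

theorem finRange_eq_cons_filter_of_val_eq_zero {n : ℕ} {i : Fin n} (hi : (i : ℕ) = 0) :
    List.finRange n = i :: (List.finRange n).filter (· ≠ i) := by
  obtain ⟨m, rfl⟩ := Nat.exists_eq_add_one_of_ne_zero i.pos.ne'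
  obtain rfl : i = 0 := Fin.ext hi
  simp [List.finRange_succ, List.filter_map, Function.comp_def, Fin.succ_ne_zero]

end ListProd

section WedgeProduct

variable {R M : Type*} [CommRing R] [AddCommGroup M] [Module R M]

theorem ι_mul_ι_swap (a b : M) : ι R a * ι R b = -(ι R b * ι R a) :=
  eq_neg_of_add_eq_zero_left (ι_add_mul_swap a b)

theorem ι_mul_ι_mul_ι_rotate (a b c : M) :
    ι R a * (ι R b * ι R c) = ι R b * ι R c * ι R a := by
  rw [← mul_assoc, ι_mul_ι_swap a b, neg_mul, mul_assoc, ι_mul_ι_swap a c, mul_neg, neg_neg,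
    mul_assoc]

theorem ι_mul_ι_mul_ι_add (a b c : M) :
    ι R a * ι R b * ι R (a + b + c) = ι R a * ι R b * ι R c := by
  have hab : ι R a * ι R b * ι R a = 0 := by
    rw [← ι_mul_ι_mul_ι_rotate, ← mul_assoc, ι_sq_zero, zero_mul]
  have hbb : ι R a * ι R b * ι R b = 0 := by rw [mul_assoc, ι_sq_zero, mul_zero]
  rw [map_add, map_add, mul_add, mul_add, hab, hbb, zero_add, zero_add]

theorem ι_mul_prod_map_ι_of_mem {α : Type*} (f : α → M) {a : α} {l : List α} (ha : a ∈ l) :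
    ι R (f a) * (l.map fun x => ι R (f x)).prod = 0 := by
  obtain ⟨i, rfl⟩ := List.get_of_mem ha
  have hl : (l.map fun x => ι R (f x)) = List.ofFn fun k => ι R (f (l.get k)) := by
    conv_lhs => rw [← List.ofFn_get l, List.map_ofFn]
    rfl
  rw [hl]
  exact ι_mul_prod_list (fun k => f (l.get k)) i

theorem prod_map_ι_mem_exteriorPower {α : Type*} (f : α → M) (l : List α) :
    (l.map fun x => ι R (f x)).prod ∈ ⋀[R]^l.length M := by
  induction l with
  | nil => exact SetLike.one_mem_graded _
  | cons a l ih =>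
    rw [List.map_cons, List.prod_cons, List.length_cons, exteriorPower, pow_succ']
    exact Submodule.mul_mem_mul (LinearMap.mem_range_self _ _) ih

end WedgeProduct

section PermutationAction

variable {N n : ℕ}

theorem pact_mul (g : Perm (Fin N)) (x y : ExteriorAlgebra ℚ (Fin N → ℚ)) :
    pact N g (x * y) = pact N g x * pact N g y :=
  map_mul (ExteriorAlgebra.map (LinearMap.funLeft ℚ ℚ ⇑g⁻¹)) x y

theorem pact_ι (g : Perm (Fin N)) (v : Fin N → ℚ) : pact N g (ι ℚ v) = ι ℚ (v ∘ ⇑g⁻¹) :=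
  ExteriorAlgebra.map_apply_ι _ v

theorem pact_ι_single (g : Perm (Fin N)) (m : Fin N) :
    pact N g (ι ℚ (Pi.single m 1)) = ι ℚ (Pi.single (g m) 1) := by
  rw [pact_ι, Pi.single_comp_equiv]
  rfl

theorem pact_ι_one (g : Perm (Fin N)) : pact N g (ι ℚ 1) = ι ℚ 1 := by
  rw [pact_ι, Pi.one_comp]

theorem pact_ιMulti_single (g : Perm (Fin N)) (s : Fin n → Fin N) :
    pact N g (ιMulti ℚ n fun k => Pi.single (s k) 1) =
      ιMulti ℚ n fun k => Pi.single (g (s k)) 1 := by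
  rw [ιMulti_apply, ιMulti_apply, pact, AlgHom.toLinearMap_apply, map_list_prod, List.map_ofFn]
  exact congrArg (fun f => (List.ofFn f).prod) (funext fun k => pact_ι_single g (s k))

theorem mul_mem_span_pact {y x : ExteriorAlgebra ℚ (Fin N → ℚ)} (hy : ∀ g, pact N g y = y)
    {s : Fin n → Fin N} (hs : Function.Injective s) (hx : x ∈ ⋀[ℚ]^n (Fin N → ℚ)) :
    y * x ∈ Submodule.span ℚ
      (Set.range fun g => pact N g (y * ιMulti ℚ n fun k => Pi.single (s k) 1)) := by
  rw [← exteriorPower.ιMulti_family_span_fixedDegree_of_span ℚ (Pi.basisFun ℚ (Fin N)).span_eq]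
    at hx
  induction hx using Submodule.span_induction with
  | mem x hx =>
    obtain ⟨t, rfl⟩ := hx
    obtain ⟨g, hg⟩ := Perm.exists_extending_pair s (Set.powersetCard.ofFinEmbEquiv.symm t) hs
      (Set.powersetCard.ofFinEmbEquiv.symm t).injective
    refine Submodule.subset_span ⟨g, ?_⟩
    simp only [pact_mul, hy, pact_ιMulti_single, hg, ιMulti_family, Function.comp_def,
      Pi.basisFun_apply]
  | zero => simp
  | add x x' _ _ hx hx' => rw [mul_add]; exact add_mem hx hx'
  | smul c x _ hx => rw [mul_smul_comm]; exact Submodule.smul_mem _ c hx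

theorem ι_single_mul_add_sum_pact_swap {κ : Type*} [Fintype κ] {r : κ → Fin N} {q : Fin N}
    {x : ExteriorAlgebra ℚ (Fin N → ℚ)} (hr : Function.Injective r) (hqr : q ∉ Set.range r)
    (hfix : ∀ i, pact N (swap (r i) q) x = x)
    (hzero : ∀ m ∉ insert q (Set.range r), ι ℚ (Pi.single m 1) * x = 0) :
    ι ℚ (Pi.single q 1) * x + ∑ i, pact N (swap (r i) q) (ι ℚ (Pi.single q 1) * x) =
      ι ℚ 1 * x := by
  have hone : (1 : Fin N → ℚ) = ∑ m, Pi.single m 1 := (Finset.univ_sum_single _).symm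
  simp only [pact_mul, pact_ι_single, swap_apply_right, hfix]
  rw [hone, map_sum, Finset.sum_mul, Fintype.sum_eq_add_sum_compl q]
  congr 1
  refine Finset.sum_of_injOn r hr.injOn (fun i _ => ?_) (fun m hmq hmr => hzero m ?_) fun _ _ => rfl
  · simpa using fun h => hqr ⟨i, h⟩
  · simpa [not_or] using And.intro hmq hmr

end PermutationAction

section Generator

variable {j : ℕ}

/-- The positions of the last `2j - 1` basis vectors `e_{2j+1}, …, e_{4j-1}` (whose `0`-based
indices are `2j, …, 4j - 2`), the factors of `ρbase` not moved by the transpositions in `ρ`. -/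
def tailIdx (j : ℕ) : Fin (2 * j - 1) ↪ Fin (4 * j - 1) where
  toFun k := ⟨2 * j + k, by omega⟩
  inj' k l h := by simpa [Fin.ext_iff] using h

theorem ρbase_eq (hj : 0 < j) :
    ρbase j = E j ⟨2 * j - 1, by omega⟩ * ιMulti ℚ (2 * j - 1) fun k => ε j (tailIdx j k) := by
  have hidx : ∀ k, 2 * j - 1 + (k + 1) = 2 * j + k := by omega
  rw [ρbase, List.ofFn_congr (by omega : 2 * j = (2 * j - 1) + 1), List.ofFn_succ, List.prod_cons,
    ιMulti_apply]
  simp only [Fin.val_cast, Fin.val_succ, hidx]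
  rfl

theorem pact_swap_ιMulti_tailIdx {p q : Fin (4 * j - 1)} (hp : (p : ℕ) < 2 * j)
    (hq : (q : ℕ) < 2 * j) :
    pact (4 * j - 1) (swap p q) (ιMulti ℚ (2 * j - 1) fun k => ε j (tailIdx j k)) =
      ιMulti ℚ (2 * j - 1) fun k => ε j (tailIdx j k) := by
  have hne : ∀ {p : Fin (4 * j - 1)}, (p : ℕ) < 2 * j → ∀ k, tailIdx j k ≠ p := fun hp k h =>
    (hp.trans_le (Nat.le_add_right _ _)).ne' (congrArg Fin.val h)
  refine (pact_ιMulti_single _ _).trans ?_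
  simp only [swap_apply_of_ne_of_ne (hne hp _) (hne hq _)]
  rfl

theorem E_mul_ιMulti_tailIdx {m : Fin (4 * j - 1)} (hm : 2 * j ≤ (m : ℕ)) :
    E j m * ιMulti ℚ (2 * j - 1) (fun k => ε j (tailIdx j k)) = 0 := by
  have hk : tailIdx j ⟨m - 2 * j, by omega⟩ = m := Fin.ext (Nat.add_sub_cancel' hm)
  rw [← hk, ιMulti_apply]
  exact ι_mul_prod_list (fun k => ε j (tailIdx j k)) _

theorem ρElt_eq (hj : 0 < j) :
    ρElt j = ι ℚ 1 * ιMulti ℚ (2 * j - 1) fun k => ε j (tailIdx j k) := by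
  rw [ρElt, ρbase_eq hj]
  refine ι_single_mul_add_sum_pact_swap (fun m m' h => ?_) ?_
    (fun m => pact_swap_ιMulti_tailIdx (m.isLt.trans_le (Nat.sub_le _ _))
      (Nat.sub_one_lt (by omega)))
    fun m hm => E_mul_ιMulti_tailIdx ?_
  · simpa only [Fin.ext_iff] using h
  · rintro ⟨m, hm⟩
    exact m.isLt.ne (congrArg Fin.val hm)
  · by_contra! hlt
    rcases Nat.lt_or_ge m (2 * j - 1) with h | h
    · exact hm (Set.mem_insert_of_mem _ ⟨⟨m, h⟩, rfl⟩)
    · exact hm (.inl (Fin.ext (Nat.le_antisymm (Nat.le_sub_one_of_lt hlt) h)))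

theorem ι_one_mul_mem_Ksub (hj : 0 < j) {x : ExteriorAlgebra ℚ (Fin (4 * j - 1) → ℚ)}
    (hx : x ∈ ⋀[ℚ]^(2 * j - 1) (Fin (4 * j - 1) → ℚ)) : ι ℚ 1 * x ∈ Ksub j := by
  rw [Ksub, ρElt_eq hj]
  exact mul_mem_span_pact pact_ι_one (tailIdx j).injective hx

end Generator

section Loops

variable {j : ℕ}

/-- The sum `e_{2i+2} + e_{2i+3}` of the two basis vectors of the `i`-th loop `B_i`, so that `S_I`
is the wedge product of the loop sums over the loops outside `I`. -/
def loopSum (j : ℕ) (k : Fin (2 * j - 2)) : Fin (4 * j - 1) → ℚ :=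
  ε j (idx j k false) + ε j (idx j k true)

theorem SI_eq_prod_loopSum (I : Finset (Fin (2 * j - 2))) :
    SI j I =
      (((List.finRange (2 * j - 2)).filter (· ∉ I)).map fun k => ι ℚ (loopSum j k)).prod := by
  have hchoice : (Finset.univ.filter fun c : Fin (2 * j - 2) → Bool => ∀ i ∈ I, c i = false) =
      Fintype.piFinset fun k => if k ∈ I then {false} else Finset.univ := by
    ext c
    simp only [Finset.mem_filter, Finset.mem_univ, true_and, Fintype.mem_piFinset]
    exact forall_congr' fun k => by by_cases hk : k ∈ I <;> simp [hk]
  have hexpand := MultilinearMap.map_sum_finset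
    (MultilinearMap.mkPiAlgebraFin ℚ (2 * j - 2) (ExteriorAlgebra ℚ (Fin (4 * j - 1) → ℚ)))
    (fun k b => if k ∈ I then 1 else ι ℚ (ε j (idx j k b)))
    (fun k => if k ∈ I then {false} else Finset.univ)
  simp only [MultilinearMap.mkPiAlgebraFin_apply] at hexpand
  rw [SI, hchoice, ← hexpand, ← prod_map_ite_one_eq_prod_map_filter, List.ofFn_eq_map]
  congr! 3 with k
  by_cases hk : k ∈ I <;> simp [hk, loopSum, add_comm]

theorem SI_mem_exteriorPower (I : Finset (Fin (2 * j - 2))) :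
    SI j I ∈ ⋀[ℚ]^(Iᶜ.card) (Fin (4 * j - 1) → ℚ) := by
  have hcard : Iᶜ.card = ((List.finRange (2 * j - 2)).filter (· ∉ I)).length := by
    rw [← List.toFinset_card_of_nodup ((List.nodup_finRange _).filter _)]
    congr 1
    ext k
    simp
  rw [SI_eq_prod_loopSum, hcard]
  exact prod_map_ι_mem_exteriorPower _ _

theorem ι_loopSum_mul_SI_of_notMem {I : Finset (Fin (2 * j - 2))} {k : Fin (2 * j - 2)}
    (hk : k ∉ I) :
    ι ℚ (loopSum j k) * SI j I = 0 := by
  rw [SI_eq_prod_loopSum]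
  exact ι_mul_prod_map_ι_of_mem _ (by simpa using hk)

theorem SI_empty_eq {k : Fin (2 * j - 2)} (hk : (k : ℕ) = 0) :
    SI j ∅ = ι ℚ (loopSum j k) * SI j {k} := by
  simp only [SI_eq_prod_loopSum, Finset.notMem_empty, not_false_eq_true, decide_true,
    List.filter_true, Finset.mem_singleton]
  conv_lhs => rw [finRange_eq_cons_filter_of_val_eq_zero hk, List.map_cons, List.prod_cons]

theorem idx_injective : Function.Injective fun p : Fin (2 * j - 2) × Bool => idx j p.1 p.2 := by
  rintro ⟨k, b⟩ ⟨k', b'⟩ h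
  have hval : 2 * (k : ℕ) + 3 + b.toNat = 2 * (k' : ℕ) + 3 + b'.toNat := congrArg Fin.val h
  have hb := Bool.toNat_lt b
  have hb' := Bool.toNat_lt b'
  refine Prod.ext (Fin.ext ?_) (Function.LeftInverse.injective Bool.ofNat_toNat ?_)
  · change (k : ℕ) = k'
    omega
  · change b.toNat = b'.toNat
    omega

theorem one_eq_add_sum_loopSum (hj : 0 < j) :
    (1 : Fin (4 * j - 1) → ℚ) = ε j ⟨0, by omega⟩ + ε j ⟨1, by omega⟩ + ε j ⟨2, by omega⟩ +
      ∑ k, loopSum j k := by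
  let place : Fin 3 ⊕ Fin (2 * j - 2) × Bool → Fin (4 * j - 1) :=
    Sum.elim (Fin.castLE (by omega)) fun p => idx j p.1 p.2
  have hplace : Function.Bijective place := by
    rw [Fintype.bijective_iff_injective_and_card]
    refine ⟨(Fin.castLE_injective _).sumElim idx_injective fun a p h => ?_, ?_⟩
    · have hval : (a : ℕ) = 2 * (p.1 : ℕ) + 3 + p.2.toNat := congrArg Fin.val h
      omega
    · simp only [Fintype.card_sum, Fintype.card_fin, Fintype.card_prod, Fintype.card_bool]
      omega
  have hloop : ∀ k, loopSum j k = ∑ b, ε j (idx j k b) := fun k => by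
    rw [loopSum, add_comm, Fintype.sum_bool]
  have hone : (1 : Fin (4 * j - 1) → ℚ) = ∑ m, ε j m := (Finset.univ_sum_single _).symm
  rw [hone, ← hplace.sum_comp, Fintype.sum_sum_type, Fin.sum_univ_three, Fintype.sum_prod_type]
  simp only [hloop]
  rfl

theorem ι_one_mul_SI {v : Fin (4 * j - 1) → ℚ} (hv : 1 = v + ∑ k, loopSum j k)
    (I : Finset (Fin (2 * j - 2))) :
    ι ℚ 1 * SI j I = ι ℚ v * SI j I + ∑ k ∈ I, ι ℚ (loopSum j k) * SI j I := by
  rw [hv, map_add, add_mul, map_sum, Finset.sum_mul]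
  congr 1
  exact (Finset.sum_subset (Finset.subset_univ I)
    fun k _ hk => ι_loopSum_mul_SI_of_notMem hk).symm

theorem E_mul_E_mul_SI_singleton_mem_exteriorPower (a b : Fin (4 * j - 1)) (k : Fin (2 * j - 2)) :
    E j a * E j b * SI j {k} ∈ ⋀[ℚ]^(2 * j - 1) (Fin (4 * j - 1) → ℚ) := by
  have hE : ∀ m, E j m ∈ ⋀[ℚ]^1 (Fin (4 * j - 1) → ℚ) := fun m => by
    rw [exteriorPower, pow_one]
    exact LinearMap.mem_range_self _ _
  have hcard : 1 + 1 + ({k}ᶜ : Finset (Fin (2 * j - 2))).card = 2 * j - 1 := by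
    have hk := k.isLt
    rw [Finset.card_compl, Fintype.card_fin, Finset.card_singleton]
    omega
  rw [← hcard]
  exact SetLike.mul_mem_graded (SetLike.mul_mem_graded (hE a) (hE b)) (SI_mem_exteriorPower _)

theorem E_mul_E_mul_SI_add_mem_Ksub {a b c : Fin (4 * j - 1)} {k : Fin (2 * j - 2)}
    (hk : (k : ℕ) = 0) (habc : 1 = ε j a + ε j b + ε j c + ∑ k, loopSum j k) :
    E j a * E j b * SI j ∅ + E j a * E j b * E j c * SI j {k} ∈ Ksub j := by
  have hj : 0 < j := by have := k.isLt; omega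
  have hexpand : ι ℚ 1 * (E j a * E j b * SI j {k}) =
      E j a * E j b * SI j ∅ + E j a * E j b * E j c * SI j {k} := by
    rw [← mul_assoc, E, E, E, ι_mul_ι_mul_ι_rotate, mul_assoc, ι_one_mul_SI habc,
      Finset.sum_singleton, ← SI_empty_eq hk, mul_add, ← mul_assoc, ι_mul_ι_mul_ι_add, add_comm]
  exact hexpand ▸ ι_one_mul_mem_Ksub hj (E_mul_E_mul_SI_singleton_mem_exteriorPower a b k)

end Loops

end

/-- For `j ≥ 2`, in `W = Λ^{2j} ℚ^{4j−1}` with the permutation action of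
`S_{4j−1}` and the submodule `K` generated by `ρ`, the three vectors
`e₁∧e₂∧S + e₁∧e₂∧e₃∧S₁`, `e₁∧e₃∧S − e₁∧e₂∧e₃∧S₁` and `e₂∧e₃∧S + e₁∧e₂∧e₃∧S₁`
all lie in `K`. -/
theorem stmt8 (j : ℕ) (hj : 2 ≤ j) :
    (E j ⟨0, by omega⟩ * E j ⟨1, by omega⟩ * SI j ∅
        + E j ⟨0, by omega⟩ * E j ⟨1, by omega⟩ * E j ⟨2, by omega⟩ * SI j {⟨0, by omega⟩}
      ∈ Ksub j) ∧
    (E j ⟨0, by omega⟩ * E j ⟨2, by omega⟩ * SI j ∅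
        - E j ⟨0, by omega⟩ * E j ⟨1, by omega⟩ * E j ⟨2, by omega⟩ * SI j {⟨0, by omega⟩}
      ∈ Ksub j) ∧
    (E j ⟨1, by omega⟩ * E j ⟨2, by omega⟩ * SI j ∅
        + E j ⟨0, by omega⟩ * E j ⟨1, by omega⟩ * E j ⟨2, by omega⟩ * SI j {⟨0, by omega⟩}
      ∈ Ksub j) := by
  have h₀₂₁ : E j ⟨0, by omega⟩ * E j ⟨2, by omega⟩ * E j ⟨1, by omega⟩ =
      -(E j ⟨0, by omega⟩ * E j ⟨1, by omega⟩ * E j ⟨2, by omega⟩) := by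
    rw [mul_assoc, mul_assoc, ← mul_neg]
    exact congrArg _ (ι_mul_ι_swap _ _)
  have h₁₂₀ : E j ⟨1, by omega⟩ * E j ⟨2, by omega⟩ * E j ⟨0, by omega⟩ =
      E j ⟨0, by omega⟩ * E j ⟨1, by omega⟩ * E j ⟨2, by omega⟩ := by
    rw [mul_assoc (E j ⟨0, _⟩)]
    exact (ι_mul_ι_mul_ι_rotate _ _ _).symm
  have hsum := one_eq_add_sum_loopSum (Nat.zero_lt_of_lt hj)
  refine ⟨E_mul_E_mul_SI_add_mem_Ksub rfl hsum, ?_, ?_⟩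
  · rw [sub_eq_add_neg, ← neg_mul, ← h₀₂₁]
    exact E_mul_E_mul_SI_add_mem_Ksub rfl (hsum.trans (by abel))
  · rw [← h₁₂₀]
    exact E_mul_E_mul_SI_add_mem_Ksub rfl (hsum.trans (by abel))
end

section
/- Let r ≥ 2. The subspace of Λ^{r−2} U_{2r−2} consisting of all vectors fixed by each of the r−1 commuting transpositions (1 2), (3 4), …, (2r−3 2r−2) of S_{2r−2} is exactly one-dimensional. (Equivalently: the hook representation V_{r,1^{r−2}} of S_{2r−2} has a unique one-dimensional subspace of invariants for the subgroup (S_2)^{r−1} generated by these transpositions.) -/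
noncomputable section

/-- The sum-of-coordinates linear functional on `ℚ^N`. -/
def sumMap (N : ℕ) : (Fin N → ℚ) →ₗ[ℚ] ℚ := ∑ i, LinearMap.proj i

/-- The standard representation `U_N = {x ∈ ℚ^N : ∑ x_i = 0}` of the symmetric group. -/
def U (N : ℕ) : Submodule ℚ (Fin N → ℚ) := LinearMap.ker (sumMap N)

lemma mem_U {N : ℕ} (x : Fin N → ℚ) : x ∈ U N ↔ ∑ i, x i = 0 := by
  simp [U, sumMap, LinearMap.mem_ker]

/-- The action of a permutation on `ℚ^N` by permuting coordinates. -/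
def permMap (N : ℕ) (σ : Equiv.Perm (Fin N)) : (Fin N → ℚ) →ₗ[ℚ] (Fin N → ℚ) :=
  LinearMap.funLeft ℚ ℚ ⇑σ⁻¹

lemma permMap_mem {N : ℕ} (σ : Equiv.Perm (Fin N)) {x : Fin N → ℚ} (hx : x ∈ U N) :
    permMap N σ x ∈ U N := by
  rw [mem_U] at hx ⊢
  simpa [permMap, LinearMap.funLeft_apply, Function.comp] using
    (Equiv.sum_comp σ⁻¹ x).trans hx

/-- The action of a permutation on the standard representation `U_N`. -/
def permU (N : ℕ) (σ : Equiv.Perm (Fin N)) : ↥(U N) →ₗ[ℚ] ↥(U N) :=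
  (permMap N σ).restrict fun _ hx => permMap_mem σ hx

/-- The induced (diagonal) action on the exterior algebra of `U_N`; it preserves each
exterior power `⋀[ℚ]^k U_N`. -/
def act (N : ℕ) (σ : Equiv.Perm (Fin N)) :
    ExteriorAlgebra ℚ ↥(U N) →ₗ[ℚ] ExteriorAlgebra ℚ ↥(U N) :=
  (ExteriorAlgebra.map (permU N σ)).toLinearMap

/-- The eigenspace of a linear endomorphism for the eigenvalue `c`. -/
def eigen {V : Type*} [AddCommGroup V] [Module ℚ V] (f : V →ₗ[ℚ] V) (c : ℚ) :
    Submodule ℚ V := LinearMap.ker (f - c • LinearMap.id)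

/-- `g` belongs to the hyperoctahedral subgroup of `S_N` on the `q` pairs
`{a+2i, a+2i+1}` (`0 ≤ i < q`), inducing the permutation `τ` on the set of pairs:
`g` fixes every letter outside the pairs, and sends the `i`-th pair to the `τ(i)`-th pair. -/
def IsHypAt (a : ℕ) {N q : ℕ} (g : Equiv.Perm (Fin N)) (τ : Equiv.Perm (Fin q)) : Prop :=
  (∀ i : Fin N, ((i : ℕ) < a ∨ a + 2*q ≤ (i : ℕ)) → g i = i) ∧
  ∀ i : Fin N, ∀ _h1 : a ≤ (i : ℕ), ∀ _h2 : (i : ℕ) < a + 2*q,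
    ((g i : ℕ) - a)/2 = ((τ ⟨((i : ℕ) - a)/2, by omega⟩ : Fin q) : ℕ)

end

/-!
A transposition `(a b)` acts on `U_N` as the reflection `y ↦ y - (y_a - y_b) • (e_a - e_b)`, and
disjoint transpositions give mutually orthogonal reflections. On an exterior algebra the reflection
`y ↦ y - f y • v` acts as `x ↦ x - v ∧ (f ⌋ x)`, so a fixed `x` stays fixed when `f` is
rescaled; taking `f v = 1`, `x` is also fixed by the projection along `v` onto `ker f`. Composing
these projections over an orthogonal family, the fixed subspace of `Λ^k V` is `Λ^k` of the
intersection of the kernels. For `n + 1` disjoint transpositions of `2n + 2` letters that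
intersection has dimension `n`, and `Λ^n` of it is a line.
-/

section PreReflection

open CliffordAlgebra Module

variable {R M : Type*} [CommRing R] [AddCommGroup M] [Module R M]

lemma exteriorAlgebra_map_preReflection (v : M) (f : Dual R M) (x : ExteriorAlgebra R M) :
    ExteriorAlgebra.map (preReflection v f) x =
      x - ExteriorAlgebra.ι R v * contractLeft (Q := (0 : QuadraticForm R M)) f x := by
  induction x using CliffordAlgebra.left_induction with
  | algebraMap r => simp
  | add x y hx hy => rw [map_add, map_add, hx, hy, mul_add]; abel
  | ι_mul x m hx =>
    change ExteriorAlgebra.map _ (ExteriorAlgebra.ι R m * x) = ExteriorAlgebra.ι R m * x -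
      ExteriorAlgebra.ι R v * contractLeft f (ExteriorAlgebra.ι R m * x)
    have hcontract : contractLeft (Q := (0 : QuadraticForm R M)) f (ExteriorAlgebra.ι R m * x) =
        f m • x - ExteriorAlgebra.ι R m * contractLeft (Q := (0 : QuadraticForm R M)) f x :=
      contractLeft_ι_mul f m x
    rw [map_mul, hx, ExteriorAlgebra.map_apply_ι, preReflection_apply, hcontract]
    generalize contractLeft f x = y
    have hvv : ExteriorAlgebra.ι R v * (ExteriorAlgebra.ι R v * y) = 0 := by
      rw [← mul_assoc, ExteriorAlgebra.ι_sq_zero, zero_mul]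
    have hvm : ExteriorAlgebra.ι R v * (ExteriorAlgebra.ι R m * y) =
        -(ExteriorAlgebra.ι R m * (ExteriorAlgebra.ι R v * y)) := by
      rw [← mul_assoc, ← mul_assoc, ← neg_mul,
        eq_neg_of_add_eq_zero_left (ExteriorAlgebra.ι_add_mul_swap v m)]
    simp only [map_sub, map_smul, sub_mul, mul_sub, smul_mul_assoc, mul_smul_comm, hvv, hvm,
      smul_zero]
    abel

lemma exteriorAlgebra_map_preReflection_smul_eq_self {v : M} {f : Dual R M}
    {x : ExteriorAlgebra R M} (hx : ExteriorAlgebra.map (preReflection v f) x = x) (c : R) :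
    ExteriorAlgebra.map (preReflection v (c • f)) x = x := by
  rw [exteriorAlgebra_map_preReflection, sub_eq_self] at hx ⊢
  rw [map_smul, LinearMap.smul_apply, mul_smul_comm, hx, smul_zero]

variable {ι : Type*} {v : ι → M} {f : ι → Dual R M}

/-- The subspace of the exterior algebra fixed by the maps induced by all the reflections
`y ↦ y - f i y • v i`; as for `Module.preReflection`, no value of `f i (v i)` is imposed. -/
def preReflectionInvariants (v : ι → M) (f : ι → Dual R M) : Submodule R (ExteriorAlgebra R M) :=
  ⨅ i, LinearMap.eqLocus
    (ExteriorAlgebra.map (preReflection (v i) (f i))).toLinearMap LinearMap.id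

lemma mem_preReflectionInvariants {x : ExteriorAlgebra R M} :
    x ∈ preReflectionInvariants v f ↔
      ∀ i, ExteriorAlgebra.map (preReflection (v i) (f i)) x = x := by
  simp [preReflectionInvariants]

lemma exteriorAlgebra_map_id_sub_sum_smulRight_eq_self
    (hvf : Pairwise fun i j ↦ f i (v j) = 0) {x : ExteriorAlgebra R M}
    (hx : x ∈ preReflectionInvariants v f) (s : Finset ι) :
    ExteriorAlgebra.map (LinearMap.id - ∑ i ∈ s, (f i).smulRight (v i)) x = x := by
  classical
  induction s using Finset.induction_on with
  | empty => simp
  | insert a s ha ih =>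
    have hcomp : LinearMap.id - ∑ i ∈ insert a s, (f i).smulRight (v i) =
        preReflection (v a) (f a) ∘ₗ (LinearMap.id - ∑ i ∈ s, (f i).smulRight (v i)) := by
      ext y
      have hfa : f a (∑ i ∈ s, f i y • v i) = 0 := by
        rw [map_sum]
        refine Finset.sum_eq_zero fun i hi ↦ ?_
        rw [map_smul, hvf (ne_of_mem_of_not_mem hi ha).symm, smul_zero]
      simp only [Finset.sum_insert ha, LinearMap.sub_apply, LinearMap.add_apply,
        LinearMap.id_apply, LinearMap.sum_apply, LinearMap.smulRight_apply, LinearMap.comp_apply,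
        preReflection_apply, map_sub, hfa, zero_smul]
      abel
    rw [hcomp, ← ExteriorAlgebra.map_comp_map, AlgHom.comp_apply, ih,
      mem_preReflectionInvariants.mp hx a]

end PreReflection

section OrthogonalFamily

open Module

variable {R M N : Type*} [CommRing R] [AddCommGroup M] [Module R M] [AddCommGroup N] [Module R N]

lemma map_mem_exteriorPower (g : M →ₗ[R] N) {k : ℕ} {x : ExteriorAlgebra R M}
    (hx : x ∈ ⋀[R]^k M) : ExteriorAlgebra.map g x ∈ ⋀[R]^k N := by
  have hle : (⋀[R]^k M).map (ExteriorAlgebra.map g).toLinearMap ≤ ⋀[R]^k N := by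
    rw [ExteriorAlgebra.exteriorPower, Submodule.map_pow, ExteriorAlgebra.ι_range_map_map]
    exact pow_le_pow_left' LinearMap.map_le_range k
  exact hle ⟨x, hx, rfl⟩

variable {ι : Type*} {v : ι → M} {f : ι → Dual R M}

/-- The projection onto `⨅ i, ker (f i)` along the `v i`, when `f i (v j) = 0` for `i ≠ j` and each
`f i (v i)` is a unit. -/
noncomputable def kerProjection [Fintype ι] (v : ι → M) (f : ι → Dual R M) : M →ₗ[R] M :=
  LinearMap.id - ∑ i, (Ring.inverse (f i (v i)) • f i).smulRight (v i)

lemma kerProjection_mem_iInf_ker [Fintype ι] (hvf : Pairwise fun i j ↦ f i (v j) = 0)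
    (hu : ∀ i, IsUnit (f i (v i))) (y : M) :
    kerProjection v f y ∈ ⨅ i, LinearMap.ker (f i) := by
  simp only [Submodule.mem_iInf, LinearMap.mem_ker]
  intro i
  have hsum : ∑ j, (Ring.inverse (f j (v j)) * f j y) * f i (v j) = f i y := by
    rw [Fintype.sum_eq_single i fun j hj ↦ by rw [hvf hj.symm, mul_zero], mul_right_comm,
      Ring.inverse_mul_cancel _ (hu i), one_mul]
  simp [kerProjection, hsum]

theorem exteriorPower_inf_preReflectionInvariants [Finite ι]
    (hvf : Pairwise fun i j ↦ f i (v j) = 0) (hu : ∀ i, IsUnit (f i (v i))) (k : ℕ) :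
    ⋀[R]^k M ⊓ preReflectionInvariants v f =
      (⋀[R]^k ↥(⨅ i, LinearMap.ker (f i))).map
        (ExteriorAlgebra.map (⨅ i, LinearMap.ker (f i)).subtype).toLinearMap := by
  cases nonempty_fintype ι
  ext x
  simp only [Submodule.mem_inf, Submodule.mem_map, AlgHom.toLinearMap_apply]
  constructor
  · rintro ⟨hxk, hx⟩
    refine ⟨ExteriorAlgebra.map
      ((kerProjection v f).codRestrict _ (kerProjection_mem_iInf_ker hvf hu)) x,
      map_mem_exteriorPower _ hxk, ?_⟩
    rw [← AlgHom.comp_apply, ExteriorAlgebra.map_comp_map, LinearMap.subtype_comp_codRestrict]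
    have hvf' : Pairwise fun i j ↦ (Ring.inverse (f i (v i)) • f i) (v j) = 0 := fun i j hij ↦ by
      simp [hvf hij]
    have hx' : x ∈ preReflectionInvariants v fun i ↦ Ring.inverse (f i (v i)) • f i :=
      mem_preReflectionInvariants.mpr fun i ↦
        exteriorAlgebra_map_preReflection_smul_eq_self (mem_preReflectionInvariants.mp hx i) _
    exact exteriorAlgebra_map_id_sub_sum_smulRight_eq_self hvf' hx' _
  · rintro ⟨y, hy, rfl⟩
    refine ⟨map_mem_exteriorPower _ hy, mem_preReflectionInvariants.mpr fun i ↦ ?_⟩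
    have hcomp : preReflection (v i) (f i) ∘ₗ (⨅ i, LinearMap.ker (f i)).subtype =
        (⨅ i, LinearMap.ker (f i)).subtype := by
      ext w
      have hw : f i w = 0 := (Submodule.mem_iInf _).mp w.2 i
      simp [preReflection_apply, hw]
    rw [← AlgHom.comp_apply, ExteriorAlgebra.map_comp_map, hcomp]

end OrthogonalFamily

section Finrank

open Module

variable {K V ι : Type*} [Field K] [AddCommGroup V] [Module K V] [FiniteDimensional K V] [Fintype ι]
  {v : ι → V} {f : ι → Dual K V}

lemma finrank_iInf_ker_add_card (hvf : Pairwise fun i j ↦ f i (v j) = 0)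
    (h0 : ∀ i, f i (v i) ≠ 0) :
    finrank K ↥(⨅ i, LinearMap.ker (f i)) + Fintype.card ι = finrank K V := by
  have hsurj : Function.Surjective (LinearMap.pi f) := fun c ↦ by
    refine ⟨∑ j, (c j / f j (v j)) • v j, funext fun i ↦ ?_⟩
    rw [LinearMap.pi_apply, map_sum, Fintype.sum_eq_single i fun j hj ↦ by
      rw [map_smul, hvf hj.symm, smul_zero], map_smul, smul_eq_mul, div_mul_cancel₀ _ (h0 i)]
  rw [← LinearMap.ker_pi, ← finrank_fintype_fun_eq_card K, ← finrank_top K (ι → K),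
    ← LinearMap.range_eq_top.mpr hsurj, add_comm, LinearMap.finrank_range_add_finrank_ker]

theorem finrank_exteriorPower_inf_preReflectionInvariants (hvf : Pairwise fun i j ↦ f i (v j) = 0)
    (h0 : ∀ i, f i (v i) ≠ 0) (k : ℕ) :
    finrank K ↥(⋀[K]^k V ⊓ preReflectionInvariants v f) =
      (finrank K V - Fintype.card ι).choose k := by
  have hinj : Function.Injective
      (ExteriorAlgebra.map (⨅ i, LinearMap.ker (f i)).subtype).toLinearMap :=
    ExteriorAlgebra.map_injective <| LinearMap.exists_leftInverse_of_injective _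
      (Submodule.ker_subtype _)
  rw [exteriorPower_inf_preReflectionInvariants hvf (fun i ↦ (h0 i).isUnit),
    ← (Submodule.equivMapOfInjective _ hinj _).finrank_eq, exteriorPower.finrank_eq,
    ← finrank_iInf_ker_add_card hvf h0, Nat.add_sub_cancel]

end Finrank

namespace U

open Module

variable {N : ℕ}

/-- The vector `e_a - e_b` of the standard representation. -/
def root (a b : Fin N) : U N :=
  ⟨Pi.single a 1 - Pi.single b 1, by simp [mem_U]⟩

/-- The linear form `y ↦ y_a - y_b` on the standard representation. -/
def coroot (a b : Fin N) : Dual ℚ (U N) :=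
  (LinearMap.proj (R := ℚ) (φ := fun _ ↦ ℚ) a - LinearMap.proj b) ∘ₗ (U N).subtype

lemma coe_root (a b : Fin N) : (root a b : Fin N → ℚ) = Pi.single a 1 - Pi.single b 1 := rfl

lemma coroot_apply (a b : Fin N) (y : U N) : coroot a b y = y.1 a - y.1 b := rfl

lemma coroot_root_self {a b : Fin N} (hab : a ≠ b) : coroot a b (root a b) = 2 := by
  simp [coroot_apply, coe_root, hab, hab.symm, one_add_one_eq_two]

lemma coroot_root_of_disjoint {a b c d : Fin N} (hac : a ≠ c) (had : a ≠ d) (hbc : b ≠ c)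
    (hbd : b ≠ d) : coroot a b (root c d) = 0 := by
  simp [coroot_apply, coe_root, hac, had, hbc, hbd]

lemma permU_swap (a b : Fin N) :
    permU N (Equiv.swap a b) = preReflection (root a b) (coroot a b) := by
  ext y j
  change y.1 ((Equiv.swap a b)⁻¹ j) = _
  rw [Equiv.swap_inv, Equiv.swap_apply_def, preReflection_apply]
  simp only [AddSubgroupClass.coe_sub, SetLike.val_smul, coroot_apply, coe_root, Pi.sub_apply,
    Pi.smul_apply, Pi.single_apply, smul_eq_mul]
  split_ifs with hja hjb hjb <;> simp_all

lemma finrank_succ (N : ℕ) : finrank ℚ (U (N + 1)) = N := by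
  have hne : sumMap (N + 1) ≠ 0 := fun h ↦ by
    simpa [sumMap] using LinearMap.congr_fun h (Pi.single 0 1)
  have h := Module.Dual.finrank_ker_add_one_of_ne_zero hne
  rw [finrank_fin_fun] at h
  exact Nat.succ_injective h

end U

lemma iInf_eigen_act_swap_one {ι : Type*} {N : ℕ} (a b : ι → Fin N) :
    ⨅ i, eigen (act N (Equiv.swap (a i) (b i))) 1 =
      preReflectionInvariants (fun i ↦ U.root (a i) (b i)) (fun i ↦ U.coroot (a i) (b i)) := by
  refine iInf_congr fun i ↦ ?_
  rw [eigen, act, U.permU_swap, one_smul, LinearMap.eqLocus_eq_ker_sub]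

theorem stmt12_general {ι : Type*} [Fintype ι] {N : ℕ} {a b : ι → Fin (N + 1)}
    (hab : Function.Injective (Sum.elim a b)) (k : ℕ) :
    Module.finrank ℚ
      ↥((⋀[ℚ]^k ↥(U (N + 1))) ⊓
        ⨅ i, eigen (act (N + 1) (Equiv.swap (a i) (b i))) 1) =
      (N - Fintype.card ι).choose k := by
  obtain ⟨ha, hb, hne⟩ := Sum.elim_injective.mp hab
  rw [iInf_eigen_act_swap_one, finrank_exteriorPower_inf_preReflectionInvariants, U.finrank_succ]
  · exact fun i j hij ↦ U.coroot_root_of_disjoint (ha.ne hij) (hne i j) (hne j i).symm (hb.ne hij)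
  · exact fun i ↦ by rw [U.coroot_root_self (hne i i)]; exact two_ne_zero

lemma injective_sumElim_two_mul (n : ℕ) :
    Function.Injective (Sum.elim
      (fun i : Fin n ↦ (⟨2 * i, by omega⟩ : Fin (2 * n)))
      (fun i : Fin n ↦ ⟨2 * i + 1, by omega⟩)) := by
  refine Sum.elim_injective.mpr ⟨fun i j hij ↦ ?_, fun i j hij ↦ ?_, fun i j hij ↦ ?_⟩ <;>
    rw [Fin.mk.injEq] at hij <;> omega

/-- For `r ≥ 2`, the subspace of `Λ^{r−2} U_{2r−2}` of vectors fixed by each of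
the `r−1` commuting transpositions `(1 2), (3 4), …, (2r−3 2r−2)` of `S_{2r−2}` is exactly
one-dimensional. -/
theorem stmt12 (r : ℕ) (hr : 2 ≤ r) :
    Module.finrank ℚ
      ↥((⋀[ℚ]^(r-2) ↥(U (2*r-2))) ⊓
        ⨅ (i : Fin (r-1)),
          eigen (act (2*r-2)
            (Equiv.swap (⟨2*(i : ℕ), by omega⟩ : Fin (2*r-2)) ⟨2*(i : ℕ)+1, by omega⟩)) 1) = 1 := by
  obtain ⟨n, rfl⟩ := Nat.exists_eq_add_of_le' hr
  exact (stmt12_general (injective_sumElim_two_mul (n + 1)) n).trans (by simp [two_mul, add_assoc])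
end
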